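/- arXiv:1902.05604 — 5 statements merged into one kernel-verified Lean document; each statement's English description precedes it below -/
import Mathlib

section
/- Let N = (P,T,F,Var) be a UDPN over a countably infinite data domain D and let i, f be ℚ⁺-markings. If f is ℚ⁺-reachable from i, then there exists a ℚ⁺-run ρ such that i →ρ_{ℚ⁺} f and |dval(ρ)| ≤ |dval(i) ∪ dval(f)| + 1 + maxvars(N). -/
open Finset

noncomputable section
open scoped Classical

/-- An unordered data Petri net over places `P`, transitions `T`, variables `V`,
with countably infinite data domain `D = ℕ`.
`pre p t` is the function `F(p,t) : V → ℕ` and `post t p` is `F(t,p) : V → ℕ`. -/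
structure UDPN (P T V : Type) where
  pre : P → T → V → ℕ
  post : T → P → V → ℕ

/-- An X-step `(c, t, π)`: coefficient, transition and mode. -/
structure Step (T V : Type) where
  c : ℚ
  t : T
  π : V → ℕ

variable {P T V : Type} [Fintype P] [Fintype T] [Fintype V]

/-- The `P × V` rational matrix `F(•,t)`. -/
def preMat (N : UDPN P T V) (t : T) (p : P) (x : V) : ℚ := (N.pre p t x : ℚ)

/-- The displacement `Δ(t) = F(t,•) − F(•,t)` as a `P × V` rational matrix. -/
def delta (N : UDPN P T V) (t : T) (p : P) (x : V) : ℚ :=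
  (N.post t p x : ℚ) - (N.pre p t x : ℚ)

/-- `A ∘ π⁻¹`: the `P × ℕ` matrix with `(A∘π⁻¹)(p,α) = A(p,x)` if `α = π x`,
and `0` if `α` is outside the range of `π`. (For injective `π` the sum has at
most one nonzero summand.) -/
def compInv (A : P → V → ℚ) (π : V → ℕ) (p : P) (α : ℕ) : ℚ :=
  ∑ x : V, if π x = α then A p x else 0

/-- Only finitely many nonzero columns. -/
def FinCols (m : P → ℕ → ℚ) : Prop := {α : ℕ | ∃ p, m p α ≠ 0}.Finite

/-- `IsMarking pos m`: `m` is an X-marking; `pos = true` corresponds to `X = ℚ⁺`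
(all entries nonnegative), `pos = false` to `X = ℚ`. -/
def IsMarking (pos : Bool) (m : P → ℕ → ℚ) : Prop :=
  FinCols m ∧ (pos = true → ∀ p α, 0 ≤ m p α)

/-- Data values of a marking. -/
def dvalM (m : P → ℕ → ℚ) : Set ℕ := {α | ∃ p, m p α ≠ 0}

/-- A valid X-step: nonnegative coefficient and injective mode.  -/
def IsStep (s : Step T V) : Prop := 0 ≤ s.c ∧ Function.Injective s.π

/-- A valid X-run: a finite sequence of X-steps. -/
def IsRun (ρ : List (Step T V)) : Prop := ∀ s ∈ ρ, IsStep s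

/-- The effect `c · (Δ(t) ∘ π⁻¹)` of a step. -/
def stepEffect (N : UDPN P T V) (s : Step T V) (p : P) (α : ℕ) : ℚ :=
  s.c * compInv (delta N s.t) s.π p α

/-- The effect `Δ(ρ)` of a run. -/
def runEffect (N : UDPN P T V) (ρ : List (Step T V)) (p : P) (α : ℕ) : ℚ :=
  (ρ.map fun s => stepEffect N s p α).sum

/-- A step `(c,t,π)` is fireable at `m` if `m − c·(F(•,t)∘π⁻¹)` is again an
X-marking: finitely many nonzero columns and (when `pos`) nonnegative entries. -/
def stepFireable (pos : Bool) (N : UDPN P T V) (m : P → ℕ → ℚ) (s : Step T V) : Prop :=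
  FinCols (fun p α => m p α - s.c * compInv (preMat N s.t) s.π p α) ∧
  (pos = true → ∀ p α, 0 ≤ m p α - s.c * compInv (preMat N s.t) s.π p α)

/-- A run is fireable at `m` if each step is fireable at the corresponding
intermediate marking. -/
def runFireable (pos : Bool) (N : UDPN P T V) : (P → ℕ → ℚ) → List (Step T V) → Prop
  | _, [] => True
  | m, s :: ρ => stepFireable pos N m s ∧
      runFireable pos N (fun p α => m p α + stepEffect N s p α) ρ

/-- `m →ρ_X m'` : `ρ` is fireable at `m` and `m' = m + Δ(ρ)`. -/
def Reaches (pos : Bool) (N : UDPN P T V) (i : P → ℕ → ℚ) (ρ : List (Step T V))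
    (f : P → ℕ → ℚ) : Prop :=
  runFireable pos N i ρ ∧ f = fun p α => i p α + runEffect N ρ p α

/-- `f` is X-reachable from `i`. -/
def Reach (pos : Bool) (N : UDPN P T V) (i f : P → ℕ → ℚ) : Prop :=
  ∃ ρ, IsRun ρ ∧ Reaches pos N i ρ f

/-- `vars(t)`. -/
def varsOf (N : UDPN P T V) (t : T) : Set V :=
  {x | ∃ p, N.pre p t x ≠ 0 ∨ N.post t p x ≠ 0}

/-- `maxvars(N) = max_{t ∈ T} |vars(t)|` (0 if `T` is empty). -/
def maxvars (N : UDPN P T V) : ℕ :=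
  Finset.univ.sup fun t : T => (varsOf N t).ncard

/-- `dval(ρ)`: the data values used by a run. -/
def runDval (N : UDPN P T V) (ρ : List (Step T V)) : Set ℕ :=
  {α | ∃ s ∈ ρ, ∃ x ∈ varsOf N s.t, s.π x = α}
/-- For `α ∈ E`: the least element of `{β ∈ E | β > α}` if nonempty, else `min E`. -/
def nextE (E : Finset ℕ) (α : ℕ) : ℕ :=
  if h : (E.filter fun β => α < β).Nonempty then (E.filter fun β => α < β).min' h
  else if h' : E.Nonempty then E.min' h' else 0

/-- The inverse of `nextE` on `E`: the greatest element of `{γ ∈ E | γ < β}` if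
nonempty, else `max E`. -/
def prevE (E : Finset ℕ) (β : ℕ) : ℕ :=
  if h : (E.filter fun γ => γ < β).Nonempty then (E.filter fun γ => γ < β).max' h
  else if h' : E.Nonempty then E.max' h' else 0

/-- The mode `π'` of `rot(E,ω)`, characterized by: the permutation matrix `P'` of
`π'` satisfies `P'(•,α) = P(•,α)` for `α ∉ E` and `P'(•,α) = P(•, nextE α)` for
`α ∈ E` (i.e. `π' x = α ↔ π x = nextE α` for `α ∈ E`). -/
def rotMode {V : Type} (E : Finset ℕ) (π : V → ℕ) (x : V) : ℕ :=
  if π x ∈ E then prevE E (π x) else π x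

/-- `rot(E,ω)`. -/
def rotStep (E : Finset ℕ) (s : Step T V) : Step T V := ⟨s.c, s.t, rotMode E s.π⟩

/-- The uniformization `U(E,ω)`: the concatenation
`rot^0(E, ω/|E|) ⋯ rot^{|E|−1}(E, ω/|E|)`. -/
def uniformize (E : Finset ℕ) (s : Step T V) : List (Step T V) :=
  (List.range E.card).map fun k => (rotStep E)^[k] ⟨s.c / (E.card : ℚ), s.t, s.π⟩

/-- Column `α` of `Δ(t)·P_π` is zero. -/
def zeroCol (N : UDPN P T V) (s : Step T V) (α : ℕ) : Prop :=
  ∀ p, compInv (delta N s.t) s.π p α = 0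

/-- The transposition of the data values `α` and `β`. -/
def swapVal (α β γ : ℕ) : ℕ := if γ = α then β else if γ = β then α else γ

/-- `R(α,E,ω)`: if column `α` of `Δ(t)·P_π` is zero then `ω` itself; otherwise the
step whose permutation matrix is obtained from `P_π` by exchanging columns `α` and
`β`, where `β` is the least datum in `E` whose column of `Δ(t)·P_π` is zero. -/
def replaceStep (N : UDPN P T V) (α : ℕ) (E : Finset ℕ) (s : Step T V) : Step T V :=
  if zeroCol N s α then s
  else if h : (E.filter fun β => zeroCol N s β).Nonempty then
    ⟨s.c, s.t, fun x => swapVal α ((E.filter fun β => zeroCol N s β).min' h) (s.π x)⟩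
  else s

/-- `dec(E,α,σ)`: the concatenation `U(E,R(α,E,σ(1))) ⋯ U(E,R(α,E,σ(n)))`. -/
def decRun (N : UDPN P T V) (α : ℕ) (E : Finset ℕ) (σ : List (Step T V)) :
    List (Step T V) :=
  σ.flatMap fun s => uniformize E (replaceStep N α E s)

/-- A histogram of order `q`: a `V × ℕ` matrix with nonnegative rational entries
and finitely many nonzero columns, every row summing to `q` and every column
summing to at most `q`. -/
def IsHistogram (H : V → ℕ → ℚ) (q : ℚ) : Prop :=
  0 ≤ q ∧ (∀ x α, 0 ≤ H x α) ∧ ({α | ∃ x, H x α ≠ 0}).Finite ∧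
  (∀ x, ∑ᶠ α, H x α = q) ∧ (∀ α, ∑ x : V, H x α ≤ q)

/-- `col(H)`: the nonzero columns of `H`. -/
def colH (H : V → ℕ → ℚ) : Set ℕ := {α | ∃ x, H x α ≠ 0}

/-- The permutation matrix `P_π` of a mode `π`. -/
def permMat {V : Type} (π : V → ℕ) (x : V) (α : ℕ) : ℚ := if π x = α then 1 else 0

/-- `Pre(ρ)`: pairs `(p,α)` of tokens consumed by the run `ρ`. -/
def preSet (N : UDPN P T V) (ρ : List (Step T V)) : Set (P × ℕ) :=
  {pa | ∃ s ∈ ρ, ∃ x, 0 < N.pre pa.1 s.t x ∧ s.π x = pa.2}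

/-- `Post(ρ)`: pairs `(p,α)` of tokens produced by the run `ρ`. -/
def postSet (N : UDPN P T V) (ρ : List (Step T V)) : Set (P × ℕ) :=
  {pa | ∃ s ∈ ρ, ∃ x, 0 < N.post s.t pa.1 x ∧ s.π x = pa.2}

/-- A loop-less UDPN: `PrePlace(t) ∩ PostPlace(t) = ∅` for every transition. -/
def IsLoopless (N : UDPN P T V) : Prop :=
  ∀ t : T, ¬ ∃ p : P, (∃ x, 0 < N.pre p t x) ∧ (∃ x, 0 < N.post t p x)

set_option linter.unusedSectionVars false

/-- The mode that keeps the data in `S`, sends the remaining variables of `W` into the window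
`[B, B + n)` along `ι`, rotated by `r`, and sends all other variables beyond that window. -/
def foldMode (S : Finset ℕ) (B : ℕ) {n : ℕ} (W : Set V) (ι : V → Fin (n + 1)) (π : V → ℕ)
    (r : Fin (n + 1)) (x : V) : ℕ :=
  if x ∈ W then if π x ∈ S then π x else B + (ι x + r).val
  else B + (n + 1) + (Fintype.equivFin V x).val

/-- The matrix that agrees with `m` on `S` and spreads the sum of the columns of `m` in `R`
uniformly over the window `[B, B + n]`. -/
def foldMat (S R : Finset ℕ) (B n : ℕ) (m : P → ℕ → ℚ) (p : P) (α : ℕ) : ℚ :=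
  if α ∈ S then m p α
  else if B ≤ α ∧ α < B + (n + 1) then (∑ β ∈ R, m p β) / ((n + 1 : ℕ) : ℚ) else 0

/-- The rotations of a step, folded into `S` and the window `[B, B + n]`. -/
def foldStep (N : UDPN P T V) (S : Finset ℕ) (B n : ℕ) (ι : T → V → Fin (n + 1))
    (s : Step T V) : List (Step T V) :=
  (List.finRange (n + 1)).map fun r =>
    ⟨s.c / ((n + 1 : ℕ) : ℚ), s.t, foldMode S B (varsOf N s.t) (ι s.t) s.π r⟩

lemma foldMat_add (S R : Finset ℕ) (B n : ℕ) (m m' : P → ℕ → ℚ) (p : P) (α : ℕ) :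
    foldMat S R B n (fun p α => m p α + m' p α) p α =
      foldMat S R B n m p α + foldMat S R B n m' p α := by
  unfold foldMat
  split_ifs <;> simp [Finset.sum_add_distrib, add_div]

lemma foldMat_sub (S R : Finset ℕ) (B n : ℕ) (m m' : P → ℕ → ℚ) (p : P) (α : ℕ) :
    foldMat S R B n (fun p α => m p α - m' p α) p α =
      foldMat S R B n m p α - foldMat S R B n m' p α := by
  unfold foldMat
  split_ifs <;> simp [Finset.sum_sub_distrib, sub_div]

lemma foldMat_nonneg (S R : Finset ℕ) (B n : ℕ) (m : P → ℕ → ℚ) (hm : ∀ p α, 0 ≤ m p α)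
    (p : P) (α : ℕ) : 0 ≤ foldMat S R B n m p α := by
  unfold foldMat
  split_ifs
  · exact hm p α
  · exact div_nonneg (Finset.sum_nonneg fun β _ => hm p β) (by positivity)
  · exact le_rfl

lemma foldMat_eq_self {S R : Finset ℕ} (B n : ℕ) (hSR : Disjoint S R) {m : P → ℕ → ℚ}
    (hm : ∀ p, ∀ α ∉ S, m p α = 0) : foldMat S R B n m = m := by
  funext p α
  unfold foldMat
  split_ifs with h1 h2
  · rfl
  · rw [hm p α h1, Finset.sum_eq_zero, zero_div]
    exact fun β hβ => hm p β fun h => Finset.disjoint_left.mp hSR h hβ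
  · exact (hm p α h1).symm

lemma finCols_foldMat (S R : Finset ℕ) (B n : ℕ) (m : P → ℕ → ℚ) :
    FinCols (foldMat S R B n m) := by
  refine ((S ∪ Finset.Ico B (B + (n + 1))).finite_toSet).subset ?_
  rintro α ⟨p, hp⟩
  by_contra h
  simp only [Finset.coe_union, Finset.coe_Ico, Set.mem_union, Finset.mem_coe, Set.mem_Ico,
    not_or] at h
  exact hp (by rw [foldMat, if_neg h.1, if_neg h.2])

lemma foldMode_injective {S : Finset ℕ} {B n : ℕ} (hB : ∀ α ∈ S, α < B) {W : Set V}
    {ι : V → Fin (n + 1)} (hι : Set.InjOn ι W) {π : V → ℕ} (hπ : Function.Injective π)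
    (r : Fin (n + 1)) : Function.Injective (foldMode S B W ι π r) := by
  intro x y hxy
  unfold foldMode at hxy
  have hx := (ι x + r).isLt
  have hy := (ι y + r).isLt
  have hSx := hB (π x)
  have hSy := hB (π y)
  split_ifs at hxy
  all_goals first
    | exact hπ hxy
    | (exfalso; have := hSx ‹_›; linarith)
    | (exfalso; have := hSy ‹_›; linarith)
    | (exfalso; linarith)
    | exact hι ‹_› ‹_› (add_right_cancel (Fin.ext (Nat.add_left_cancel hxy)))
    | exact (Fintype.equivFin V).injective (Fin.ext (Nat.add_left_cancel hxy))

/-- Averaging a matrix over the rotated modes amounts to folding it. -/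
lemma sum_compInv_foldMode {S R : Finset ℕ} {B n : ℕ} (hB : ∀ α ∈ S, α < B)
    (hSR : Disjoint S R) {W : Set V} (ι : V → Fin (n + 1)) {π : V → ℕ}
    (hπ : ∀ x, π x ∈ S ∨ π x ∈ R) (c : ℚ) {A : P → V → ℚ} (hA : ∀ p, ∀ x ∉ W, A p x = 0)
    (p : P) (α : ℕ) :
    ∑ r, c / ((n + 1 : ℕ) : ℚ) * compInv A (foldMode S B W ι π r) p α =
      foldMat S R B n (fun p α => c * compInv A π p α) p α := by
  have hn : ((n + 1 : ℕ) : ℚ) ≠ 0 := by positivity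
  have hL : ∑ r, c / ((n + 1 : ℕ) : ℚ) * compInv A (foldMode S B W ι π r) p α =
      ∑ x, c / ((n + 1 : ℕ) : ℚ) *
        ∑ r, if foldMode S B W ι π r x = α then A p x else 0 := by
    simp only [compInv]
    rw [← Finset.mul_sum, Finset.sum_comm, Finset.mul_sum]
  have hR : ∑ β ∈ R, c * compInv A π p β =
      ∑ x, c * if π x ∈ S then 0 else A p x := by
    simp only [compInv]
    rw [← Finset.mul_sum, Finset.sum_comm, Finset.mul_sum]
    refine Finset.sum_congr rfl fun x _ => ?_
    rw [Finset.sum_ite_eq]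
    rcases hπ x with h | h
    · simp [h, Finset.disjoint_left.mp hSR h]
    · simp [h, Finset.disjoint_right.mp hSR h]
  rw [hL, foldMat, hR]
  have key : ∀ x, x ∈ W → ∀ r, foldMode S B W ι π r x =
      if π x ∈ S then π x else B + (ι x + r).val := fun x hx r => by rw [foldMode, if_pos hx]
  split_ifs with h1 h2
  · rw [compInv, Finset.mul_sum]
    refine Finset.sum_congr rfl fun x _ => ?_
    by_cases hx : x ∈ W
    · simp only [key x hx]
      by_cases hS : π x ∈ S
      · simp only [hS, if_true, Finset.sum_const, Finset.card_univ, Fintype.card_fin,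
          nsmul_eq_mul]
        field_simp
      · have hne : π x ≠ α := fun h => hS (h ▸ h1)
        have hne' : ∀ r, B + (ι x + r).val ≠ α := fun r h => by
          have := hB α h1
          linarith [Nat.zero_le (ι x + r).val]
        simp [hS, hne, hne']
    · simp [hA p x hx]
  · rw [Finset.sum_div]
    refine Finset.sum_congr rfl fun x _ => ?_
    by_cases hx : x ∈ W
    · simp only [key x hx]
      by_cases hS : π x ∈ S
      · have hne : π x ≠ α := fun h => h1 (h ▸ hS)
        simp [hS, hne]
      · have hiff : ∀ r, B + (ι x + r).val = α ↔
            (⟨α - B, by omega⟩ : Fin (n + 1)) - ι x = r := fun r => by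
          rw [sub_eq_iff_eq_add', Fin.ext_iff]
          simp only
          omega
        simp only [hS, if_false, hiff, Finset.sum_ite_eq, Finset.mem_univ, if_true]
        ring
    · simp [hA p x hx]
  · refine Finset.sum_eq_zero fun x _ => ?_
    by_cases hx : x ∈ W
    · simp only [key x hx]
      by_cases hS : π x ∈ S
      · have hne : π x ≠ α := fun h => h1 (h ▸ hS)
        simp [hS, hne]
      · have hne' : ∀ r, B + (ι x + r).val ≠ α := fun r h => by
          exact h2 ⟨h ▸ Nat.le_add_right _ _, h ▸ Nat.add_lt_add_left (ι x + r).isLt B⟩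
        simp [hS, hne']
    · simp [hA p x hx]

lemma preMat_eq_zero (N : UDPN P T V) (t : T) (p : P) (x : V) (hx : x ∉ varsOf N t) :
    preMat N t p x = 0 := by
  simp only [varsOf, Set.mem_ofPred_eq, not_exists, not_or, not_not] at hx
  simp [preMat, (hx p).1]

lemma delta_eq_zero (N : UDPN P T V) (t : T) (p : P) (x : V) (hx : x ∉ varsOf N t) :
    delta N t p x = 0 := by
  simp only [varsOf, Set.mem_ofPred_eq, not_exists, not_or, not_not] at hx
  simp [delta, (hx p).1, (hx p).2]

lemma finCols_compInv (c : ℚ) (A : P → V → ℚ) (π : V → ℕ) :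
    FinCols fun p α => c * compInv A π p α := by
  refine (Set.finite_range π).subset ?_
  rintro α ⟨p, hp⟩
  by_contra h
  refine hp ?_
  have h0 : compInv A π p α = 0 :=
    Finset.sum_eq_zero fun x _ => if_neg fun hx => h ⟨x, hx⟩
  simp only [h0, mul_zero]

lemma FinCols.add {m m' : P → ℕ → ℚ} (hm : FinCols m) (hm' : FinCols m') :
    FinCols fun p α => m p α + m' p α := by
  refine (hm.union hm').subset ?_
  rintro α ⟨p, hp⟩
  by_contra h
  simp only [Set.mem_union, Set.mem_ofPred_eq, not_or, not_exists, not_not] at h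
  exact hp (by simp only [h.1 p, h.2 p, add_zero])

lemma FinCols.sub {m m' : P → ℕ → ℚ} (hm : FinCols m) (hm' : FinCols m') :
    FinCols fun p α => m p α - m' p α := by
  refine (hm.union hm').subset ?_
  rintro α ⟨p, hp⟩
  by_contra h
  simp only [Set.mem_union, Set.mem_ofPred_eq, not_or, not_exists, not_not] at h
  exact hp (by simp only [h.1 p, h.2 p, sub_zero])

lemma compInv_preMat_nonneg (N : UDPN P T V) (t : T) (π : V → ℕ) (p : P) (α : ℕ) :
    0 ≤ compInv (preMat N t) π p α := by
  refine Finset.sum_nonneg fun x _ => ?_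
  split_ifs
  · exact Nat.cast_nonneg _
  · exact le_rfl

lemma neg_compInv_preMat_le (N : UDPN P T V) (t : T) (π : V → ℕ) (p : P) (α : ℕ) :
    -compInv (preMat N t) π p α ≤ compInv (delta N t) π p α := by
  unfold compInv
  rw [← Finset.sum_neg_distrib]
  refine Finset.sum_le_sum fun x _ => ?_
  have : (0 : ℚ) ≤ N.post t p x := Nat.cast_nonneg _
  split_ifs
  · simp only [preMat, delta]
    linarith
  · simp

/-- A run whose total consumption is available at the outset is fireable. -/
lemma runFireable_of_sum_pre_le (N : UDPN P T V) (L : List (Step T V))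
    (hL : ∀ s ∈ L, 0 ≤ s.c) (m : P → ℕ → ℚ) (hm : FinCols m)
    (h : ∀ p α, (L.map fun s => s.c * compInv (preMat N s.t) s.π p α).sum ≤ m p α) :
    runFireable true N m L := by
  induction L generalizing m with
  | nil => trivial
  | cons s L ih =>
    have hs : 0 ≤ s.c := hL s (by simp)
    have hL' : ∀ s ∈ L, 0 ≤ s.c := fun u hu => hL u (by simp [hu])
    simp only [List.map_cons, List.sum_cons] at h
    refine ⟨⟨hm.sub (finCols_compInv _ _ _), fun _ p α => ?_⟩, ih hL' _ ?_ fun p α => ?_⟩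
    · have h0 : 0 ≤ (L.map fun s => s.c * compInv (preMat N s.t) s.π p α).sum := by
        refine List.sum_nonneg fun q hq => ?_
        obtain ⟨u, hu, rfl⟩ := List.mem_map.mp hq
        exact mul_nonneg (hL' u hu) (compInv_preMat_nonneg N _ _ p α)
      linarith [h p α]
    · exact hm.add (finCols_compInv _ _ _)
    · have := mul_le_mul_of_nonneg_left (neg_compInv_preMat_le N s.t s.π p α) hs
      simp only [stepEffect]
      linarith [h p α]

lemma runEffect_append (N : UDPN P T V) (L L' : List (Step T V)) (p : P) (α : ℕ) :
    runEffect N (L ++ L') p α = runEffect N L p α + runEffect N L' p α := by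
  simp [runEffect]

lemma runFireable_append {pos : Bool} (N : UDPN P T V) (L L' : List (Step T V))
    (m : P → ℕ → ℚ) (h : runFireable pos N m L)
    (h' : runFireable pos N (fun p α => m p α + runEffect N L p α) L') :
    runFireable pos N m (L ++ L') := by
  induction L generalizing m with
  | nil => simpa [runEffect] using h'
  | cons s L ih =>
    refine ⟨h.1, ih _ h.2 ?_⟩
    simpa [runEffect, add_assoc] using h'

lemma sum_map_foldStep (N : UDPN P T V) (S : Finset ℕ) (B n : ℕ) (ι : T → V → Fin (n + 1))
    (s : Step T V) (g : Step T V → ℚ) :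
    ((foldStep N S B n ι s).map g).sum =
      ∑ r, g ⟨s.c / ((n + 1 : ℕ) : ℚ), s.t, foldMode S B (varsOf N s.t) (ι s.t) s.π r⟩ := by
  rw [foldStep, List.map_map, ← List.ofFn_eq_map, List.sum_ofFn]
  rfl

lemma runEffect_foldStep (N : UDPN P T V) {S R : Finset ℕ} {B n : ℕ} (hB : ∀ α ∈ S, α < B)
    (hSR : Disjoint S R) (ι : T → V → Fin (n + 1)) {s : Step T V}
    (hπ : ∀ x, s.π x ∈ S ∨ s.π x ∈ R) (p : P) (α : ℕ) :
    runEffect N (foldStep N S B n ι s) p α = foldMat S R B n (stepEffect N s) p α := by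
  rw [runEffect, sum_map_foldStep]
  exact sum_compInv_foldMode hB hSR (ι s.t) hπ s.c (delta_eq_zero N s.t) p α

lemma runEffect_flatMap_foldStep (N : UDPN P T V) {S R : Finset ℕ} {B n : ℕ}
    (hB : ∀ α ∈ S, α < B) (hSR : Disjoint S R) (ι : T → V → Fin (n + 1))
    {ρ : List (Step T V)} (hπ : ∀ s ∈ ρ, ∀ x, s.π x ∈ S ∨ s.π x ∈ R) (p : P) (α : ℕ) :
    runEffect N (ρ.flatMap (foldStep N S B n ι)) p α =
      foldMat S R B n (runEffect N ρ) p α := by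
  induction ρ with
  | nil => simp [runEffect, foldMat]
  | cons s ρ ih =>
    have hcons : runEffect N (s :: ρ) = fun p α => stepEffect N s p α + runEffect N ρ p α := by
      funext p α
      simp [runEffect]
    rw [List.flatMap_cons, runEffect_append, ih fun u hu => hπ u (by simp [hu]),
      runEffect_foldStep N hB hSR ι (hπ s (by simp)), hcons, foldMat_add]

lemma runFireable_flatMap_foldStep (N : UDPN P T V) {S R : Finset ℕ} {B n : ℕ}
    (hB : ∀ α ∈ S, α < B) (hSR : Disjoint S R) (ι : T → V → Fin (n + 1))
    {ρ : List (Step T V)} (hρ : IsRun ρ) (hπ : ∀ s ∈ ρ, ∀ x, s.π x ∈ S ∨ s.π x ∈ R)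
    (m : P → ℕ → ℚ) (h : runFireable true N m ρ) :
    runFireable true N (foldMat S R B n m) (ρ.flatMap (foldStep N S B n ι)) := by
  induction ρ generalizing m with
  | nil => trivial
  | cons s ρ ih =>
    rw [List.flatMap_cons]
    refine runFireable_append N _ _ _ ?_ ?_
    · refine runFireable_of_sum_pre_le N _ ?_ _ (finCols_foldMat S R B n m) fun p α => ?_
      · intro u hu
        obtain ⟨r, -, rfl⟩ := List.mem_map.mp hu
        exact div_nonneg (hρ s (by simp)).1 (by positivity)
      · have hnn := foldMat_nonneg S R B n _ (h.1.2 rfl) p α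
        rw [foldMat_sub] at hnn
        rw [sum_map_foldStep]
        have := sum_compInv_foldMode hB hSR (ι s.t) (hπ s (by simp)) s.c
          (preMat_eq_zero N s.t) p α
        simp only at this ⊢
        linarith
    · have := ih (fun u hu => hρ u (by simp [hu])) (fun u hu => hπ u (by simp [hu])) _ h.2
      convert this using 1
      funext p α
      rw [foldMat_add, runEffect_foldStep N hB hSR ι (hπ s (by simp))]

lemma exists_injOn_varsOf (N : UDPN P T V) (t : T) :
    ∃ ι : V → Fin (maxvars N + 1), Set.InjOn ι (varsOf N t) := by
  have hcard : (varsOf N t).ncard ≤ maxvars N :=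
    Finset.le_sup (f := fun t : T => (varsOf N t).ncard) (Finset.mem_univ t)
  have hle : (varsOf N t).encard ≤ (Set.univ : Set (Fin (maxvars N + 1))).encard := by
    rw [← (Set.toFinite (varsOf N t)).cast_ncard_eq, Set.encard_univ]
    simp only [ENat.card_eq_coe_fintype_card, Fintype.card_fin]
    exact_mod_cast hcard.trans (Nat.le_succ _)
  obtain ⟨ι, -, hι⟩ := (Set.toFinite (varsOf N t)).exists_injOn_of_encard_le hle
  exact ⟨ι, hι⟩

/-- If `f` is ℚ⁺-reachable from `i`, then there is a ℚ⁺-run `ρ`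
with `i →ρ_{ℚ⁺} f` and `|dval(ρ)| ≤ |dval(i) ∪ dval(f)| + 1 + maxvars(N)`. -/
theorem qplus_reach_data_bound
    (N : UDPN P T V) (i f : P → ℕ → ℚ)
    (hi : IsMarking true i) (hf : IsMarking true f)
    (hreach : Reach true N i f) :
    ∃ ρ : List (Step T V), IsRun ρ ∧ Reaches true N i ρ f ∧
      (runDval N ρ).ncard ≤ (dvalM i ∪ dvalM f).ncard + 1 + maxvars N := by
  obtain ⟨ρ, hρ, hfire, hfeq⟩ := hreach
  have hSfin : (dvalM i ∪ dvalM f).Finite := hi.1.union hf.1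
  set S : Finset ℕ := hSfin.toFinset with hS
  set R : Finset ℕ := (ρ.toFinset.biUnion fun s => Finset.univ.image s.π) \ S
  have hSR : Disjoint S R := Finset.disjoint_sdiff
  obtain ⟨B, hB⟩ : ∃ B, ∀ α ∈ S, α < B :=
    ⟨S.sup id + 1, fun α hα => Nat.lt_succ_of_le (Finset.le_sup (f := id) hα)⟩
  choose ι hι using exists_injOn_varsOf N
  have hπ : ∀ s ∈ ρ, ∀ x, s.π x ∈ S ∨ s.π x ∈ R := by
    intro s hs x
    by_cases h : s.π x ∈ S
    · exact Or.inl h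
    · refine Or.inr (Finset.mem_sdiff.mpr ⟨Finset.mem_biUnion.mpr ⟨s, by simpa using hs, ?_⟩, h⟩)
      exact Finset.mem_image_of_mem _ (Finset.mem_univ x)
  have hi0 : foldMat S R B (maxvars N) i = i :=
    foldMat_eq_self B _ hSR fun p α hα => by
      by_contra h
      exact hα (hSfin.mem_toFinset.mpr (Or.inl ⟨p, h⟩))
  have hf0 : foldMat S R B (maxvars N) f = f :=
    foldMat_eq_self B _ hSR fun p α hα => by
      by_contra h
      exact hα (hSfin.mem_toFinset.mpr (Or.inr ⟨p, h⟩))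
  refine ⟨ρ.flatMap (foldStep N S B (maxvars N) ι), ?_, ⟨?_, ?_⟩, ?_⟩
  · intro u hu
    obtain ⟨s, hs, hu⟩ := List.mem_flatMap.mp hu
    obtain ⟨r, -, rfl⟩ := List.mem_map.mp hu
    exact ⟨div_nonneg (hρ s hs).1 (by positivity),
      foldMode_injective hB (hι s.t) (hρ s hs).2 r⟩
  · have := runFireable_flatMap_foldStep N hB hSR ι hρ hπ i hfire
    rwa [hi0] at this
  · funext p α
    rw [runEffect_flatMap_foldStep N hB hSR ι hπ]
    calc f p α = foldMat S R B (maxvars N) f p α := by rw [hf0]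
      _ = foldMat S R B (maxvars N) i p α + foldMat S R B (maxvars N) (runEffect N ρ) p α := by
        rw [← foldMat_add, ← hfeq]
      _ = i p α + foldMat S R B (maxvars N) (runEffect N ρ) p α := by rw [hi0]
  · have hsub : runDval N (ρ.flatMap (foldStep N S B (maxvars N) ι)) ⊆
        ↑(S ∪ Finset.Ico B (B + (maxvars N + 1))) := by
      rintro α ⟨u, hu, x, hx, rfl⟩
      obtain ⟨s, hs, hu⟩ := List.mem_flatMap.mp hu
      obtain ⟨r, -, rfl⟩ := List.mem_map.mp hu
      simp only [foldMode, Finset.coe_union, Finset.coe_Ico, Set.mem_union, Finset.mem_coe,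
        Set.mem_Ico] at hx ⊢
      rw [if_pos hx]
      split_ifs with h
      · exact Or.inl h
      · exact Or.inr ⟨Nat.le_add_right _ _, Nat.add_lt_add_left (ι s.t x + r).isLt B⟩
    calc _ ≤ _ := Set.ncard_le_ncard hsub (Finset.finite_toSet _)
      _ = (S ∪ Finset.Ico B (B + (maxvars N + 1))).card := Set.ncard_coe_finset _
      _ ≤ S.card + (Finset.Ico B (B + (maxvars N + 1))).card := Finset.card_union_le _ _
      _ = (dvalM i ∪ dvalM f).ncard + 1 + maxvars N := by
        rw [Nat.card_Ico, Set.ncard_eq_toFinset_card _ hSfin, ← hS, Nat.add_sub_cancel_left]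
        omega
end
end

section
/- Let N = (P,T,F,Var) be a UDPN over a countably infinite data domain D and let i, f be ℚ-markings. If f is ℚ-reachable from i, then there exists a ℚ-run ρ such that i →ρ_ℚ f and |dval(ρ)| ≤ |dval(i) ∪ dval(f)| + 1 + maxvars(N). -/
open Finset

noncomputable section
open scoped Classical

variable {P T V : Type} [Fintype P] [Fintype T] [Fintype V]

set_option linter.unusedSectionVars false

lemma delta_eq_zero_of_notMem_varsOf (N : UDPN P T V) {t : T} {x : V} (hx : x ∉ varsOf N t)
    (p : P) : delta N t p x = 0 := by
  simp only [varsOf, Set.mem_ofPred_eq, not_exists, not_or, not_not] at hx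
  simp [delta, hx p]

lemma compInv_eq_zero_of_notMem_range (A : P → V → ℚ) {π : V → ℕ} {α : ℕ}
    (hα : α ∉ Set.range π) (p : P) : compInv A π p α = 0 :=
  Finset.sum_eq_zero fun x _ => if_neg fun h => hα ⟨x, h⟩

lemma FinCols.add_smul_compInv {m : P → ℕ → ℚ} (hm : FinCols m) (c : ℚ) (A : P → V → ℚ)
    (π : V → ℕ) : FinCols fun p α => m p α + c * compInv A π p α := by
  refine (Set.Finite.union hm (Set.finite_range π)).subset ?_
  rintro α ⟨p, hp⟩
  by_contra h
  simp only [Set.mem_union, not_or, Set.mem_ofPred_eq, not_exists, not_not] at h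
  exact hp (by simp [h.1 p, compInv_eq_zero_of_notMem_range A h.2 p])

/-- Over `ℚ`, every run is fireable at every marking. -/
lemma runFireable_false (N : UDPN P T V) (ρ : List (Step T V)) {m : P → ℕ → ℚ}
    (hm : FinCols m) : runFireable false N m ρ := by
  induction ρ generalizing m with
  | nil => trivial
  | cons s ρ ih =>
    refine ⟨⟨?_, by simp⟩, ih (hm.add_smul_compInv s.c (delta N s.t) s.π)⟩
    simpa [sub_eq_add_neg] using hm.add_smul_compInv (-s.c) (preMat N s.t) s.π

/-- The sum of the columns of the effect of a run lying outside `S`, computed stepwise. -/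
lemma sum_runEffect_sdiff (N : UDPN P T V) (S F : Finset ℕ) (p : P) (ρ : List (Step T V))
    (hF : ∀ s ∈ ρ, ∀ x, s.π x ∈ F) :
    ∑ α ∈ F \ S, runEffect N ρ p α =
      (ρ.map fun s => s.c * ∑ x, if s.π x ∈ S then 0 else delta N s.t p x).sum := by
  induction ρ with
  | nil => simp [runEffect]
  | cons s ρ ih =>
    have hs : ∀ x, s.π x ∈ F := hF s (by simp)
    have hstep : ∑ α ∈ F \ S, stepEffect N s p α =
        s.c * ∑ x, if s.π x ∈ S then 0 else delta N s.t p x := by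
      simp only [stepEffect, compInv, ← Finset.mul_sum]
      rw [Finset.sum_comm]
      congr 1
      refine Finset.sum_congr rfl fun x _ => ?_
      rw [Finset.sum_ite_eq]
      by_cases hx : s.π x ∈ S <;> simp [hx, hs x]
    rw [List.map_cons, List.sum_cons, ← ih fun s' hs' => hF s' (by simp [hs']), ← hstep,
      ← Finset.sum_add_distrib]
    rfl

/-- The data values of a run all lie in some finite set. -/
lemma exists_finset_forall_mode_mem (ρ : List (Step T V)) :
    ∃ F : Finset ℕ, ∀ s ∈ ρ, ∀ x, s.π x ∈ F := by
  induction ρ with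
  | nil => exact ⟨∅, by simp⟩
  | cons s ρ ih =>
    obtain ⟨F, hF⟩ := ih
    refine ⟨F ∪ Finset.univ.image s.π, fun s' hs' x => ?_⟩
    rcases List.mem_cons.1 hs' with rfl | h
    · simp
    · exact Finset.mem_union_left _ (hF s' h x)

lemma exists_injective_eqOn (g : V → ℕ) {W : Set V} (hg : Set.InjOn g W) :
    ∃ g' : V → ℕ, Function.Injective g' ∧ Set.EqOn g' g W := by
  refine ⟨fun x => if x ∈ W then g x else Finset.univ.sup g + 1 + Fintype.equivFin V x,
    fun x y hxy => ?_, fun x hx => if_pos hx⟩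
  have hle : ∀ z, g z ≤ Finset.univ.sup g := fun z => Finset.le_sup (Finset.mem_univ z)
  have hx' := hle x
  have hy' := hle y
  dsimp only at hxy
  split_ifs at hxy with hx hy hy
  · exact hg hx hy hxy
  · omega
  · omega
  · exact (Fintype.equivFin V).injective (Fin.ext (by omega))

/-- A mode can be changed so that the values outside `S` taken on `W` lie in `E`, provided that
`E` is disjoint from `S` and has at least `|W|` elements. -/
lemma exists_relabelled_mode {π : V → ℕ} (hπ : Function.Injective π) {S E : Finset ℕ}
    (hSE : Disjoint S E) {W : Set V} (hW : W.ncard ≤ E.card) :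
    ∃ g : V → ℕ, Function.Injective g ∧
      ∀ x ∈ W, (π x ∈ S → g x = π x) ∧ (π x ∉ S → g x ∈ E) := by
  obtain ⟨h, hmaps, hinj⟩ := (Set.toFinite W).exists_injOn_of_encard_le (t := (E : Set ℕ)) (by
    rw [← (Set.toFinite W).cast_ncard_eq, Set.encard_coe_eq_coe_finsetCard]
    exact_mod_cast hW)
  obtain ⟨g, hg, hgW⟩ := exists_injective_eqOn (fun x => if π x ∈ S then π x else h x) (W := W) (by
    have hdisj : ∀ a ∈ S, a ∉ E := fun a ha => Finset.disjoint_left.1 hSE ha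
    intro x hx y hy hxy
    have hxE : h x ∈ E := hmaps hx
    have hyE : h y ∈ E := hmaps hy
    dsimp only at hxy
    split_ifs at hxy with h1 h2 h2
    · exact hπ hxy
    · exact absurd hyE (hxy ▸ hdisj _ h1)
    · exact absurd hxE (hxy ▸ hdisj _ h2)
    · exact hinj hx hy hxy)
  refine ⟨g, hg, fun x hx => ⟨fun hS => ?_, fun hS => ?_⟩⟩
  · simp [hgW hx, hS]
  · simpa [hgW hx, hS] using hmaps hx

/-- The number of permutations of `E` that send an element `a ∈ E` to `α`; it does not depend
on `a`. -/
lemma sum_perm_ite_eq (E : Finset ℕ) {a b : ℕ} (ha : a ∈ E) (hb : b ∈ E) (α : ℕ) :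
    ∑ σ : Equiv.Perm E, (if Equiv.Perm.ofSubtype σ a = α then (1 : ℚ) else 0) =
      ∑ σ : Equiv.Perm E, if Equiv.Perm.ofSubtype σ b = α then (1 : ℚ) else 0 := by
  refine Fintype.sum_equiv (Equiv.mulRight (Equiv.swap ⟨a, ha⟩ ⟨b, hb⟩)) _ _ fun σ => ?_
  simp [Equiv.Perm.ofSubtype_apply_of_mem, ha]

/-- The steps obtained from `s` by replacing its mode by `g` and averaging over all permutations
of the data values in `E`. -/
def averageStep (E : Finset ℕ) (s : Step T V) (g : V → ℕ) : List (Step T V) :=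
  (Finset.univ : Finset (Equiv.Perm E)).toList.map fun σ =>
    ⟨s.c / Fintype.card (Equiv.Perm E), s.t, Equiv.Perm.ofSubtype σ ∘ g⟩

lemma isStep_of_mem_averageStep {E : Finset ℕ} {s s' : Step T V} {g : V → ℕ} (hs : 0 ≤ s.c)
    (hg : Function.Injective g) (hs' : s' ∈ averageStep E s g) : IsStep s' := by
  obtain ⟨σ, -, rfl⟩ := List.mem_map.1 hs'
  exact ⟨by positivity, (Equiv.injective _).comp hg⟩

lemma ofSubtype_perm_mem (E : Finset ℕ) (σ : Equiv.Perm E) {a : ℕ} (ha : a ∈ E) :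
    Equiv.Perm.ofSubtype σ a ∈ E := by
  rw [Equiv.Perm.ofSubtype_apply_of_mem σ ha]
  exact (σ _).2

lemma ofSubtype_perm_eq_self (E : Finset ℕ) (σ : Equiv.Perm E) {a : ℕ} (ha : a ∉ E) :
    Equiv.Perm.ofSubtype σ a = a :=
  Equiv.Perm.ofSubtype_apply_of_not_mem σ ha

lemma runEffect_flatMap (N : UDPN P T V) (ρ : List (Step T V))
    (u : Step T V → List (Step T V)) (p : P) (α : ℕ) :
    runEffect N (ρ.flatMap u) p α = (ρ.map fun s => runEffect N (u s) p α).sum := by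
  induction ρ with
  | nil => rfl
  | cons s ρ ih => simp [runEffect] at ih ⊢; simp [ih]

lemma runEffect_averageStep (N : UDPN P T V) (E : Finset ℕ) (s : Step T V) (g : V → ℕ)
    (p : P) (α : ℕ) :
    runEffect N (averageStep E s g) p α =
      s.c / Fintype.card (Equiv.Perm E) * ∑ x, delta N s.t p x *
        ∑ σ : Equiv.Perm E, if Equiv.Perm.ofSubtype σ (g x) = α then (1 : ℚ) else 0 := by
  simp only [runEffect, averageStep, List.map_map, Finset.sum_map_toList, Finset.mul_sum]
  rw [Finset.sum_comm]
  simp [stepEffect, compInv, Finset.mul_sum, Function.comp_def]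

/-- Outside `E`, averaging a relabelled step does not change the columns in `S` and yields zero
columns outside `S`. -/
lemma runEffect_averageStep_of_notMem (N : UDPN P T V) {S E : Finset ℕ}
    {s : Step T V} {g : V → ℕ}
    (hg : ∀ x ∈ varsOf N s.t, (s.π x ∈ S → g x = s.π x) ∧ (s.π x ∉ S → g x ∈ E))
    (p : P) {α : ℕ} (hα : α ∉ E) :
    runEffect N (averageStep E s g) p α = if α ∈ S then stepEffect N s p α else 0 := by
  have hσ : ∀ x, ∑ σ : Equiv.Perm E,
      (if Equiv.Perm.ofSubtype σ (g x) = α then (1 : ℚ) else 0) =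
        Fintype.card (Equiv.Perm E) * if g x = α then 1 else 0 := by
    intro x
    have h : ∀ σ : Equiv.Perm E, Equiv.Perm.ofSubtype σ (g x) = α ↔ g x = α := by
      intro σ
      by_cases hx : g x ∈ E
      · have := ofSubtype_perm_mem E σ hx
        constructor <;> rintro rfl <;> contradiction
      · rw [ofSubtype_perm_eq_self E σ hx]
    simp [h]
  have hcol : ∀ x, delta N s.t p x * (if g x = α then 1 else 0) =
      if α ∈ S then (if s.π x = α then delta N s.t p x else 0) else 0 := by
    intro x
    by_cases hx : x ∈ varsOf N s.t
    · obtain ⟨h1, h2⟩ := hg x hx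
      by_cases hS : s.π x ∈ S
      · rw [h1 hS]
        by_cases hxα : s.π x = α
        · subst hxα; simp [hS]
        · simp [hxα]
      · have hne : g x ≠ α := fun h => hα (h ▸ h2 hS)
        by_cases hαS : α ∈ S
        · have : s.π x ≠ α := fun h => hS (h ▸ hαS)
          simp [hne, this]
        · simp [hne, hαS]
    · simp [delta_eq_zero_of_notMem_varsOf N hx]
  have hcard : (Fintype.card (Equiv.Perm E) : ℚ) ≠ 0 := by
    exact_mod_cast Fintype.card_ne_zero
  rw [runEffect_averageStep]
  simp only [hσ, mul_left_comm _ (Fintype.card (Equiv.Perm E) : ℚ), ← Finset.mul_sum, hcol]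
  rw [← mul_assoc, mul_div_cancel₀ _ hcard]
  by_cases hαS : α ∈ S <;> simp [hαS, stepEffect, compInv]

/-- On `E`, every column of an averaged relabelled step is a fixed multiple of the sum of the
columns of the original step outside `S`. -/
lemma runEffect_averageStep_of_mem (N : UDPN P T V) {S E : Finset ℕ} (hSE : Disjoint S E)
    {s : Step T V} {g : V → ℕ}
    (hg : ∀ x ∈ varsOf N s.t, (s.π x ∈ S → g x = s.π x) ∧ (s.π x ∉ S → g x ∈ E))
    (p : P) {α : ℕ} (hα : α ∈ E) :
    runEffect N (averageStep E s g) p α =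
      (s.c * ∑ x, if s.π x ∈ S then 0 else delta N s.t p x) *
        ((∑ σ : Equiv.Perm E, if Equiv.Perm.ofSubtype σ α = α then (1 : ℚ) else 0) /
          Fintype.card (Equiv.Perm E)) := by
  rw [runEffect_averageStep]
  have hcol : ∀ x, (delta N s.t p x *
      ∑ σ : Equiv.Perm E, if Equiv.Perm.ofSubtype σ (g x) = α then (1 : ℚ) else 0) =
      (if s.π x ∈ S then 0 else delta N s.t p x) *
        ∑ σ : Equiv.Perm E, if Equiv.Perm.ofSubtype σ α = α then (1 : ℚ) else 0 := by
    intro x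
    by_cases hx : x ∈ varsOf N s.t
    · obtain ⟨h1, h2⟩ := hg x hx
      by_cases hS : s.π x ∈ S
      · have hE : s.π x ∉ E := Finset.disjoint_left.1 hSE hS
        have hne : s.π x ≠ α := fun h => hE (h ▸ hα)
        simp [h1 hS, ofSubtype_perm_eq_self E _ hE, hne, hS]
      · rw [if_neg hS, sum_perm_ite_eq E (h2 hS) hα]
    · simp [delta_eq_zero_of_notMem_varsOf N hx]
  simp only [hcol, ← Finset.sum_mul]
  ring

/-- If `f` is ℚ-reachable from `i`, then there is a ℚ-run `ρ`
with `i →ρ_ℚ f` and `|dval(ρ)| ≤ |dval(i) ∪ dval(f)| + 1 + maxvars(N)`. -/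
theorem q_reach_data_bound
    (N : UDPN P T V) (i f : P → ℕ → ℚ)
    (hi : IsMarking false i) (hf : IsMarking false f)
    (hreach : Reach false N i f) :
    ∃ ρ : List (Step T V), IsRun ρ ∧ Reaches false N i ρ f ∧
      (runDval N ρ).ncard ≤ (dvalM i ∪ dvalM f).ncard + 1 + maxvars N := by
  obtain ⟨ρ, hρ, -, hfρ⟩ := hreach
  have hfin : (dvalM i ∪ dvalM f).Finite := Set.Finite.union hi.1 hf.1
  set S : Finset ℕ := hfin.toFinset with hSdef
  obtain ⟨E, hES, hEcard⟩ :=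
    (Finset.finite_toSet S).infinite_compl.exists_subset_card_eq (maxvars N)
  have hSE : Disjoint S E :=
    Finset.disjoint_right.2 fun a ha haS => hES (Finset.mem_coe.2 ha) (Finset.mem_coe.2 haS)
  have hvars : ∀ t, (varsOf N t).ncard ≤ E.card := fun t => by
    rw [hEcard]
    exact Finset.le_sup (f := fun t => (varsOf N t).ncard) (Finset.mem_univ t)
  have hex : ∀ s : Step T V, ∃ g : V → ℕ, s ∈ ρ → Function.Injective g ∧
      ∀ x ∈ varsOf N s.t, (s.π x ∈ S → g x = s.π x) ∧ (s.π x ∉ S → g x ∈ E) := by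
    intro s
    by_cases hs : s ∈ ρ
    · obtain ⟨g, hg⟩ := exists_relabelled_mode (hρ s hs).2 hSE (hvars s.t)
      exact ⟨g, fun _ => hg⟩
    · exact ⟨s.π, fun h => absurd h hs⟩
  choose g hg using hex
  have hzero : ∀ p, ∀ α ∉ S, runEffect N ρ p α = 0 := by
    intro p α hα
    have h := congrFun (congrFun hfρ p) α
    simp only [hSdef, Set.Finite.mem_toFinset, Set.mem_union, not_or, dvalM, Set.mem_ofPred_eq,
      not_exists, not_not] at hα
    simpa [hα.1 p, hα.2 p] using h.symm
  have heffect : ∀ p α, runEffect N (ρ.flatMap fun s => averageStep E s (g s)) p α =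
      runEffect N ρ p α := by
    intro p α
    rw [runEffect_flatMap]
    by_cases hα : α ∈ E
    · rw [List.map_congr_left fun s hs => runEffect_averageStep_of_mem N hSE (hg s hs).2 p hα,
        List.sum_map_mul_right]
      obtain ⟨F, hF⟩ := exists_finset_forall_mode_mem ρ
      rw [← sum_runEffect_sdiff N S F p ρ hF, hzero p α (Finset.disjoint_right.1 hSE hα),
        Finset.sum_eq_zero fun β hβ => hzero p β (Finset.mem_sdiff.1 hβ).2, zero_mul]
    · rw [List.map_congr_left fun s hs => runEffect_averageStep_of_notMem N (hg s hs).2 p hα]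
      by_cases hS : α ∈ S
      · simp [hS, runEffect]
      · simp [hS, hzero p α hS]
  refine ⟨ρ.flatMap fun s => averageStep E s (g s), ?_, ⟨runFireable_false N _ hi.1, ?_⟩, ?_⟩
  · intro s' hs'
    obtain ⟨s, hs, hs'⟩ := List.mem_flatMap.1 hs'
    exact isStep_of_mem_averageStep (hρ s hs).1 (hg s hs).1 hs'
  · simpa only [heffect] using hfρ
  · have hsub : runDval N (ρ.flatMap fun s => averageStep E s (g s)) ⊆
        ((S ∪ E : Finset ℕ) : Set ℕ) := by
      rintro α ⟨s', hs', x, hx, rfl⟩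
      obtain ⟨s, hs, hs'⟩ := List.mem_flatMap.1 hs'
      obtain ⟨σ, -, rfl⟩ := List.mem_map.1 hs'
      obtain ⟨h1, h2⟩ := (hg s hs).2 x hx
      simp only [Finset.mem_coe, Finset.mem_union, Function.comp_apply]
      by_cases hS : s.π x ∈ S
      · left
        rwa [h1 hS, ofSubtype_perm_eq_self E σ (Finset.disjoint_left.1 hSE hS)]
      · exact Or.inr (ofSubtype_perm_mem E σ (h2 hS))
    have hle := Set.ncard_le_ncard hsub (Finset.finite_toSet _)
    rw [Set.ncard_coe_finset] at hle
    have hunion := Finset.card_union_le S E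
    have hScard : (dvalM i ∪ dvalM f).ncard = S.card := Set.ncard_eq_toFinset_card _ hfin
    omega
end
end

section
/- Let N = (P,T,F,Var) be a UDPN, E ⊂ D a nonempty finite set of data values, and ω = (c,t,π) a ℚ⁺-step that is fireable at a ℚ⁺-marking i, with f the ℚ⁺-marking obtained by firing ω at i. Let i', f' be ℚ-markings with f' = i' + Δ(U(E,ω)). Then: (1) for every α ∈ dval(ω) \ E, f'(•,α) − i'(•,α) = f(•,α) − i(•,α); and (2) for every α ∈ E, f'(•,α) − i'(•,α) = (1/|E|)·Σ_{β∈E} (f(•,β) − i(•,β)). -/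
open Finset

noncomputable section
open scoped Classical

variable {P T V : Type} [Fintype P] [Fintype T] [Fintype V]

/-- The position of `β` in the increasing enumeration of `E`. -/
def rankE (E : Finset ℕ) (β : ℕ) : ℕ := (E.filter fun γ => γ < β).card

lemma rankE_prevE_modEq {E : Finset ℕ} {β : ℕ} (hβ : β ∈ E) :
    prevE E β ∈ E ∧ rankE E (prevE E β) + 1 ≡ rankE E β [MOD E.card] := by
  have hE : E.Nonempty := ⟨β, hβ⟩
  unfold prevE
  split_ifs with h
  · set γ := (E.filter fun γ => γ < β).max' h with hγ
    obtain ⟨hγE, hγβ⟩ := Finset.mem_filter.1 (Finset.max'_mem _ h)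
    rw [← hγ] at hγE hγβ
    refine ⟨hγE, ?_⟩
    have hins : (E.filter fun δ => δ < β) = insert γ (E.filter fun δ => δ < γ) := by
      ext δ
      simp only [Finset.mem_filter, Finset.mem_insert]
      constructor
      · rintro ⟨hδ, hlt⟩
        have : δ ≤ γ := Finset.le_max' _ _ (Finset.mem_filter.2 ⟨hδ, hlt⟩)
        rcases this.eq_or_lt with h | h
        · exact Or.inl h
        · exact Or.inr ⟨hδ, h⟩
      · rintro (rfl | ⟨hδ, hlt⟩)
        · exact ⟨hγE, hγβ⟩
        · exact ⟨hδ, hlt.trans hγβ⟩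
    have hcard : rankE E β = rankE E γ + 1 := by
      unfold rankE
      rw [hins, Finset.card_insert_of_notMem (by simp)]
    rw [hcard]
  · set γ := E.max' hE with hγ
    have hγE : γ ∈ E := Finset.max'_mem _ hE
    refine ⟨hγE, ?_⟩
    have hfilter : (E.filter fun δ => δ < γ) = E.erase γ := by
      ext δ
      simp only [Finset.mem_filter, Finset.mem_erase]
      constructor
      · rintro ⟨hδ, hlt⟩
        exact ⟨hlt.ne, hδ⟩
      · rintro ⟨hne, hδ⟩
        exact ⟨hδ, lt_of_le_of_ne (Finset.le_max' _ _ hδ) hne⟩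
    have hzero : rankE E β = 0 := by
      rw [rankE, Finset.card_eq_zero]
      exact Finset.not_nonempty_iff_eq_empty.1 h
    have hmax : rankE E γ + 1 = E.card := by
      rw [rankE, hfilter, Finset.card_erase_add_one hγE]
    rw [hzero, hmax]
    simp [Nat.ModEq]

/-- Iterating the rotation of data values stays in `E` and lowers the rank by one modulo
`E.card` each time. -/
lemma rankE_iterate_modEq {E : Finset ℕ} {β : ℕ} (hβ : β ∈ E) (k : ℕ) :
    (rotMode E id)^[k] β ∈ E ∧
      rankE E ((rotMode E id)^[k] β) + k ≡ rankE E β [MOD E.card] := by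
  induction k with
  | zero => exact ⟨hβ, Nat.ModEq.refl _⟩
  | succ k ih =>
    obtain ⟨hmem, hmod⟩ := ih
    rw [Function.iterate_succ_apply']
    set γ := (rotMode E id)^[k] β
    have hrot : rotMode E id γ = prevE E γ := if_pos hmem
    obtain ⟨hprev, hrank⟩ := rankE_prevE_modEq hmem
    rw [hrot]
    refine ⟨hprev, ?_⟩
    have := (hrank.add_right k).trans hmod
    rwa [add_assoc, add_comm 1 k] at this

lemma rotMode_iterate_of_notMem {E : Finset ℕ} {β : ℕ} (hβ : β ∉ E) (k : ℕ) :
    (rotMode E id)^[k] β = β :=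
  Function.iterate_fixed (show rotMode E id β = β from if_neg hβ) k

lemma rotMode_iterate_eq_iff {E : Finset ℕ} {α : ℕ} (hα : α ∉ E) (β k : ℕ) :
    (rotMode E id)^[k] β = α ↔ β = α := by
  by_cases hβ : β ∈ E
  · have hk := (rankE_iterate_modEq hβ k).1
    exact ⟨fun h => absurd (h ▸ hk) hα, fun h => absurd (h ▸ hβ) hα⟩
  · rw [rotMode_iterate_of_notMem hβ]

/-- The first `E.card` iterates of the rotation visit each element of `E` exactly once. -/
lemma sum_rotMode_iterate {E : Finset ℕ} {β : ℕ} (hβ : β ∈ E) (h : ℕ → ℚ) :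
    ∑ k ∈ Finset.range E.card, h ((rotMode E id)^[k] β) = ∑ γ ∈ E, h γ := by
  have hinj : Set.InjOn (fun k => (rotMode E id)^[k] β) (Finset.range E.card) := by
    intro k hk j hj hkj
    have hmod := (rankE_iterate_modEq hβ k).2.trans (rankE_iterate_modEq hβ j).2.symm
    simp only at hkj
    rw [hkj] at hmod
    exact (Nat.ModEq.add_left_cancel' _ hmod).eq_of_lt_of_lt
      (Finset.mem_range.1 hk) (Finset.mem_range.1 hj)
  have himage : (Finset.range E.card).image (fun k => (rotMode E id)^[k] β) = E := by
    apply Finset.eq_of_subset_of_card_le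
    · intro γ hγ
      obtain ⟨k, -, rfl⟩ := Finset.mem_image.1 hγ
      exact (rankE_iterate_modEq hβ k).1
    · rw [Finset.card_image_of_injOn hinj, Finset.card_range]
  conv_rhs => rw [← himage]
  rw [Finset.sum_image hinj]

lemma sum_ite_rotMode_iterate {E : Finset ℕ} {α : ℕ} (hα : α ∈ E) (β : ℕ) (a : ℚ) :
    (∑ k ∈ Finset.range E.card, if (rotMode E id)^[k] β = α then a else 0) =
      ∑ γ ∈ E, if β = γ then a else 0 := by
  by_cases hβ : β ∈ E
  · rw [sum_rotMode_iterate hβ (fun γ => if γ = α then a else 0)]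
    simp [hα, hβ]
  · have hne : β ≠ α := fun h => hβ (h ▸ hα)
    simp [rotMode_iterate_of_notMem hβ, hβ, hne]

lemma rotStep_iterate {T V : Type} (E : Finset ℕ) (s : Step T V) (k : ℕ) :
    (rotStep E)^[k] s = ⟨s.c, s.t, fun x => (rotMode E id)^[k] (s.π x)⟩ := by
  induction k with
  | zero => rfl
  | succ k ih =>
    simp only [Function.iterate_succ_apply', ih]
    rfl

lemma runEffect_uniformize {P T V : Type} [Fintype V] (N : UDPN P T V) (E : Finset ℕ)
    (s : Step T V) (p : P) (α : ℕ) :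
    runEffect N (uniformize E s) p α = s.c / (E.card : ℚ) *
      ∑ x : V, ∑ k ∈ Finset.range E.card,
        if (rotMode E id)^[k] (s.π x) = α then delta N s.t p x else 0 := by
  rw [Finset.sum_comm, Finset.mul_sum]
  simp only [runEffect, uniformize, List.map_map, rotStep_iterate, Finset.sum_range,
    ← List.sum_ofFn]
  rw [List.ofFn_eq_map, ← List.map_coe_finRange_eq_range, List.map_map]
  rfl

/-- Effect of the uniformize operator `U(E,ω)` on the various
data values: outside `E` (but in `dval(ω)`) the effect is unchanged, on `E` the
total effect is split uniformly. -/
theorem uniformize_effect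
    (N : UDPN P T V) (E : Finset ℕ) (hE : E.Nonempty)
    (s : Step T V) (hs : IsStep s)
    (i f : P → ℕ → ℚ) (hi : IsMarking true i)
    (hfire : stepFireable true N i s)
    (hf : f = fun p α => i p α + stepEffect N s p α)
    (i' f' : P → ℕ → ℚ) (hi' : IsMarking false i') (hf'm : IsMarking false f')
    (hf' : f' = fun p α => i' p α + runEffect N (uniformize E s) p α) :
    (∀ α ∈ runDval N [s] \ (↑E : Set ℕ), ∀ p : P,
        f' p α - i' p α = f p α - i p α) ∧
    (∀ α ∈ E, ∀ p : P,
        f' p α - i' p α = (∑ β ∈ E, (f p β - i p β)) / (E.card : ℚ)) := by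
  have hcard : (E.card : ℚ) ≠ 0 := by exact_mod_cast hE.card_pos.ne'
  subst hf hf'
  simp only [add_sub_cancel_left, runEffect_uniformize, stepEffect, compInv]
  refine ⟨fun α hα p => ?_, fun α hα p => ?_⟩
  · have hαE : α ∉ E := fun h => hα.2 h
    simp only [rotMode_iterate_eq_iff hαE, Finset.sum_const, Finset.card_range, nsmul_eq_mul,
      ← Finset.mul_sum]
    field_simp
  · simp only [sum_ite_rotMode_iterate hα]
    rw [← Finset.mul_sum, Finset.sum_comm]
    ring
end
end

section
/- Let Var be a finite set and D a countably infinite set. Every histogram H (over Var × D) of order q can be decomposed as a finite sum H = H_1 + ⋯ + H_m where each H_i is an [a_i]-histogram and a_1 + ⋯ + a_m = q. -/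
open Finset

noncomputable section
open scoped Classical

variable {P T V : Type} [Fintype P] [Fintype T] [Fintype V]

/-- An `[a]`-histogram: a histogram of order `a > 0` all of whose entries lie in
`{0, a}`. -/
def IsConstHistogram (H : V → ℕ → ℚ) (a : ℚ) : Prop :=
  0 < a ∧ IsHistogram H a ∧ ∀ x α, H x α = 0 ∨ H x α = a

/-- Placing `a > 0` along an injective mode gives an `[a]`-histogram. -/
lemma isConstHistogram_mul_permMat {π : V → ℕ} (hπ : Function.Injective π) {a : ℚ}
    (ha : 0 < a) : IsConstHistogram (fun x α => a * permMat π x α) a := by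
  refine ⟨ha, ⟨ha.le, fun x α => ?_, ?_, fun x => ?_, fun α => ?_⟩, fun x α => ?_⟩
  · by_cases h : π x = α <;> simp [permMat, h, ha.le]
  · refine (Set.finite_range π).subset ?_
    rintro α ⟨x, hx⟩
    refine ⟨x, by_contra fun h => hx ?_⟩
    simp [permMat, h]
  · rw [finsum_eq_single _ (π x) fun α hα => by simp [permMat, hα.symm]]
    simp [permMat]
  · by_cases h : ∃ x, π x = α
    · obtain ⟨x, rfl⟩ := h
      simp [permMat, hπ.eq_iff]
    · push Not at h
      simp [permMat, h, ha.le]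
  · by_cases h : π x = α <;> simp [permMat, h]

/-- A nonnegative matrix with unit row sums and column sums at most one is a corner of a
doubly stochastic matrix whose opposite diagonal corner vanishes. -/
lemma fromBlocks_mem_doublyStochastic {S : Type} [Fintype S] [DecidableEq S]
    (M : Matrix V S ℚ)
    (hM : ∀ x s, 0 ≤ M x s) (hrow : ∀ x, ∑ s, M x s = 1) (hcol : ∀ s, ∑ x, M x s ≤ 1) :
    Matrix.fromBlocks 0 M M.transpose (Matrix.diagonal fun s => 1 - ∑ x, M x s) ∈
      doublyStochastic ℚ (V ⊕ S) := by
  rw [mem_doublyStochastic_iff_sum]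
  refine ⟨?_, ?_, ?_⟩
  · rintro (x | s) (y | t)
    · simp
    · simpa using hM x t
    · simpa using hM y s
    · by_cases h : s = t
      · subst h
        simpa using hcol s
      · simp [Matrix.diagonal_apply_ne _ h]
  · rintro (x | s) <;> simp [Fintype.sum_sum_type, hrow, Matrix.diagonal_apply]
  · rintro (x | s) <;> simp [Fintype.sum_sum_type, hrow, Matrix.diagonal_apply]

/-- The restriction of a permutation of `V ⊕ S` to a map from `V` to the data values in `S`. -/
def modeOfPerm {S : Finset ℕ} (σ : Equiv.Perm (V ⊕ S)) (x : V) : ℕ :=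
  Sum.elim (fun _ => 0) (fun s : S => (s : ℕ)) (σ (Sum.inl x))

/-- A rectangular version of Birkhoff's theorem. -/
lemma exists_sum_permMat (S : Finset ℕ) (M : V → ℕ → ℚ) (hM : ∀ x α, 0 ≤ M x α)
    (hS : ∀ x, ∀ α ∉ S, M x α = 0) (hrow : ∀ x, ∑ α ∈ S, M x α = 1)
    (hcol : ∀ α, ∑ x, M x α ≤ 1) :
    ∃ (m : ℕ) (π : Fin m → V → ℕ) (w : Fin m → ℚ),
      (∀ k, Function.Injective (π k)) ∧ (∀ k, 0 < w k) ∧ ∑ k, w k = 1 ∧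
      ∀ x α, M x α = ∑ k, w k * permMat (π k) x α := by
  obtain ⟨w, hw, hw_sum, hw_eq⟩ := exists_eq_sum_perm_of_mem_doublyStochastic
    (fromBlocks_mem_doublyStochastic (fun x (s : S) => M x s) (fun x s => hM x s)
      (fun x => (S.sum_coe_sort (M x)).trans (hrow x)) (fun s => hcol s))
  have entry (i j) := congrFun (congrFun hw_eq i) j
  simp only [Matrix.sum_apply, Matrix.smul_apply, PEquiv.toMatrix_apply, Equiv.toPEquiv_apply,
    Option.mem_def, Option.some.injEq, smul_eq_mul, mul_ite, mul_one, mul_zero] at entry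
  have avoid (σ) (hσ : 0 < w σ) (x y : V) : σ (Sum.inl x) ≠ Sum.inl y := by
    intro h
    have h0 : (∑ τ, if τ (Sum.inl x) = Sum.inl y then w τ else 0) = 0 :=
      entry (Sum.inl x) (Sum.inl y)
    rw [sum_eq_zero_iff_of_nonneg fun τ _ => by split_ifs <;> simp [hw]] at h0
    have := h0 σ (mem_univ _)
    rw [if_pos h] at this
    exact hσ.ne' this
  have mode (σ) (hσ : 0 < w σ) (x : V) :
      ∃ s : S, σ (Sum.inl x) = Sum.inr s ∧ modeOfPerm σ x = s := by
    rcases h : σ (Sum.inl x) with y | s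
    · exact absurd h (avoid σ hσ x y)
    · exact ⟨s, rfl, by simp [modeOfPerm, h]⟩
  have restrict (f : Equiv.Perm (V ⊕ S) → ℚ) :
      ∑ σ : {σ // 0 < w σ}, w σ * f σ = ∑ σ, w σ * f σ := by
    rw [← sum_subtype (univ.filter fun σ => 0 < w σ) (by simp) fun σ => w σ * f σ]
    exact sum_filter_of_ne fun σ _ h => (hw σ).lt_of_ne' (left_ne_zero_of_mul h)
  let e := (Fintype.equivFin {σ // 0 < w σ}).symm
  refine ⟨_, fun k => modeOfPerm (e k).1, fun k => w (e k), fun k x y hxy => ?_,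
    fun k => (e k).2, ?_, fun x α => ?_⟩
  · obtain ⟨s, hs, hs'⟩ := mode _ (e k).2 x
    obtain ⟨t, ht, ht'⟩ := mode _ (e k).2 y
    have hst : s = t := Subtype.ext (by rw [← hs', ← ht']; exact hxy)
    exact Sum.inl_injective ((e k).1.injective (by rw [hs, ht, hst]))
  · rw [e.sum_comp fun σ => w σ.1, ← hw_sum]
    simpa using restrict fun _ => 1
  · rw [e.sum_comp fun σ => w σ.1 * permMat (modeOfPerm σ.1) x α]
    by_cases hα : α ∈ S
    · rw [restrict fun σ => permMat (modeOfPerm σ) x α]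
      refine (entry (Sum.inl x) (Sum.inr ⟨α, hα⟩)).symm.trans (sum_congr rfl fun σ _ => ?_)
      rcases (hw σ).eq_or_lt with h | h
      · simp [← h]
      · obtain ⟨s, hs, hs'⟩ := mode σ h x
        simp [permMat, hs, hs', Subtype.ext_iff]
    · rw [hS x α hα, sum_eq_zero]
      rintro ⟨σ, hσ⟩ -
      obtain ⟨s, -, hs⟩ := mode σ hσ x
      have : (s : ℕ) ≠ α := fun h => hα (h ▸ s.2)
      simp [permMat, hs, this]

/-- Every histogram of order `q` decomposes as a finite sum of
`[a_k]`-histograms with `Σ a_k = q`. -/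
theorem histogram_decomposition
    (H : V → ℕ → ℚ) (q : ℚ) (hH : IsHistogram H q) :
    ∃ (m : ℕ) (Hs : Fin m → V → ℕ → ℚ) (a : Fin m → ℚ),
      (∀ k, IsConstHistogram (Hs k) (a k)) ∧ (∑ k, a k) = q ∧
      H = fun x α => ∑ k, Hs k x α := by
  obtain ⟨hq, hnonneg, hfin, hrow, hcol⟩ := hH
  rcases hq.eq_or_lt with rfl | hq
  · refine ⟨0, Fin.elim0, Fin.elim0, fun k => k.elim0, by simp, ?_⟩
    funext x α
    have : H x α ≤ ∑ y, H y α := single_le_sum (fun y _ => hnonneg y α) (mem_univ x)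
    simpa using le_antisymm (this.trans (hcol α)) (hnonneg x α)
  · have hsupp (x α) (hα : α ∉ hfin.toFinset) : H x α = 0 := by
      by_contra h
      exact hα (hfin.mem_toFinset.2 ⟨x, h⟩)
    obtain ⟨m, π, w, hπ, hw, hw_sum, hw_eq⟩ := exists_sum_permMat hfin.toFinset
      (fun x α => H x α / q) (fun x α => div_nonneg (hnonneg x α) hq.le)
      (fun x α hα => by simp [hsupp x α hα])
      (fun x => by
        rw [← sum_div, ← finsum_eq_sum_of_support_subset, hrow, div_self hq.ne']
        exact fun α hα => by_contra fun h => hα (hsupp x α h))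
      (fun α => by
        rw [← sum_div, div_le_one hq]
        exact hcol α)
    refine ⟨m, fun k x α => q * w k * permMat (π k) x α, fun k => q * w k,
      fun k => isConstHistogram_mul_permMat (hπ k) (mul_pos hq (hw k)), ?_, ?_⟩
    · rw [← mul_sum, hw_sum, mul_one]
    · funext x α
      simp_rw [mul_assoc]
      rw [← mul_sum, ← hw_eq, mul_div_cancel₀ _ hq.ne']
end
end

section
/- Let Var be a finite set and D a countably infinite set. Every histogram H (over Var × D) of order q can be written as a finite sum H = Σ_{k=1}^m c_k·P_{π_k}, where each c_k is a positive rational, Σ_{k=1}^m c_k = q, each π_k : Var → D is an injective mode whose image is contained in col(H), and P_{π_k} is the permutation matrix of π_k. -/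
open Finset

noncomputable section
open scoped Classical

variable {P T V : Type} [Fintype P] [Fintype T] [Fintype V]

/-- The restriction of a histogram to a finite set of columns, padded by its transpose and a
diagonal block to a square matrix with all row and column sums equal to `q`. -/
def padHistogram {V S : Type} [Fintype V] (A : Matrix V S ℚ) (q : ℚ) :
    Matrix (V ⊕ S) (V ⊕ S) ℚ :=
  Matrix.fromBlocks 0 A A.transpose (Matrix.diagonal fun a => q - ∑ x, A x a)

theorem smul_padHistogram_mem_doublyStochastic {V S : Type} [Fintype V] [Fintype S]
    (A : Matrix V S ℚ) {q : ℚ} (hq : 0 < q) (hA : ∀ x a, 0 ≤ A x a)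
    (hrow : ∀ x, ∑ a, A x a = q) (hcol : ∀ a, ∑ x, A x a ≤ q) :
    q⁻¹ • padHistogram A q ∈ doublyStochastic ℚ (V ⊕ S) := by
  rw [mem_doublyStochastic_iff_sum]
  refine ⟨?_, ?_, ?_⟩
  · have hpad : ∀ i j, 0 ≤ padHistogram A q i j := by
      rintro (x | a) (y | b)
      · simp [padHistogram]
      · simpa [padHistogram] using hA x b
      · simpa [padHistogram] using hA y a
      · simp only [padHistogram, Matrix.fromBlocks_apply₂₂, Matrix.diagonal_apply]
        split_ifs
        · exact sub_nonneg.2 (hcol a)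
        · exact le_rfl
    intro i j
    exact mul_nonneg (inv_nonneg.2 hq.le) (hpad i j)
  · rintro (x | a) <;>
      simp [padHistogram, ← Finset.mul_sum, hrow, hq.ne', Matrix.diagonal_apply]
  · rintro (x | a) <;>
      simp [padHistogram, ← Finset.mul_sum, hrow, hq.ne', Matrix.diagonal_apply]

/-- A nonnegative matrix with row sums `q > 0` and column sums at most `q` is a positive
combination of the 0-1 matrices of injections from rows to columns. -/
theorem exists_eq_sum_injective {V S : Type} [Fintype V] [Fintype S]
    (A : Matrix V S ℚ) {q : ℚ} (hq : 0 < q) (hA : ∀ x a, 0 ≤ A x a)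
    (hrow : ∀ x, ∑ a, A x a = q) (hcol : ∀ a, ∑ x, A x a ≤ q) :
    ∃ (m : ℕ) (c : Fin m → ℚ) (π : Fin m → V → S),
      (∀ k, 0 < c k) ∧ ∑ k, c k = q ∧ (∀ k, Function.Injective (π k)) ∧
      ∀ x a, A x a = ∑ k, c k * if π k x = a then 1 else 0 := by
  obtain ⟨w, hw, hw1, hwM⟩ := exists_eq_sum_perm_of_mem_doublyStochastic
    (smul_padHistogram_mem_doublyStochastic A hq hA hrow hcol)
  have entry : ∀ i j, padHistogram A q i j = ∑ σ, q * w σ * if σ i = j then 1 else 0 := by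
    intro i j
    have h := congrFun (congrFun hwM i) j
    simp only [Matrix.sum_apply, Matrix.smul_apply, smul_eq_mul, Equiv.Perm.permMatrix,
      PEquiv.toMatrix_apply, Equiv.toPEquiv_apply, Option.mem_some_iff] at h
    rw [eq_inv_mul_iff_mul_eq₀ hq.ne', Finset.mul_sum] at h
    simp only [← h, mul_assoc]
  let K := {σ : Equiv.Perm (V ⊕ S) // 0 < w σ}
  have sum_K : ∀ f : Equiv.Perm (V ⊕ S) → ℚ,
      ∑ σ, q * w σ * f σ = ∑ σ : K, q * w σ * f σ := by
    intro f
    rw [← Finset.sum_filter_of_ne (p := fun σ => 0 < w σ) fun σ _ h =>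
      (hw σ).lt_of_ne fun h0 => h (by simp [← h0])]
    exact Finset.sum_subtype _ (by simp) _
  have exists_inr : ∀ (σ : K) (x : V), ∃ a, σ.1 (Sum.inl x) = Sum.inr a := by
    intro σ x
    rcases h : σ.1 (Sum.inl x) with y | a
    · have h0 := entry (Sum.inl x) (Sum.inl y)
      simp only [padHistogram, Matrix.fromBlocks_apply₁₁, Matrix.zero_apply] at h0
      have h1 := (Finset.sum_eq_zero_iff_of_nonneg (fun τ _ => mul_nonneg
        (mul_nonneg hq.le (hw τ)) (by split_ifs <;> norm_num))).1 h0.symm σ.1 (Finset.mem_univ _)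
      simp [h, hq.ne', σ.2.ne'] at h1
    · exact ⟨a, rfl⟩
  choose p hp using exists_inr
  let e := (Fintype.equivFin K).symm
  refine ⟨Fintype.card K, fun k => q * w (e k), fun k => p (e k),
    fun k => mul_pos hq (e k).2, ?_, fun k x y hxy => ?_, fun x a => ?_⟩
  · rw [e.sum_comp fun σ : K => q * w σ]
    simpa [← Finset.mul_sum, hw1] using (sum_K fun _ => 1).symm
  · exact Sum.inl_injective ((e k).1.injective
      ((hp _ x).trans ((congrArg Sum.inr hxy).trans (hp _ y).symm)))
  · rw [e.sum_comp fun σ : K => q * w σ * if p σ x = a then 1 else 0]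
    have h := entry (Sum.inl x) (Sum.inr a)
    rw [sum_K] at h
    simpa [padHistogram, hp] using h

/-- Every histogram of order `q` is a finite sum
`Σ_k c_k · P_{π_k}` with `c_k > 0`, `Σ_k c_k = q`, each `π_k` an injective mode
with image contained in `col(H)`. -/
theorem histogram_perm_decomposition
    (H : V → ℕ → ℚ) (q : ℚ) (hH : IsHistogram H q) :
    ∃ (m : ℕ) (c : Fin m → ℚ) (π : Fin m → V → ℕ),
      (∀ k, 0 < c k) ∧ (∑ k, c k) = q ∧
      (∀ k, Function.Injective (π k)) ∧
      (∀ k x, π k x ∈ colH H) ∧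
      H = fun x α => ∑ k, c k * permMat (π k) x α := by
  obtain ⟨hq, hnn, hfin, hrow, hcol⟩ := hH
  rcases hq.eq_or_lt with rfl | hq
  · refine ⟨0, Fin.elim0, fun k => k.elim0, fun k => k.elim0, by simp, fun k => k.elim0,
      fun k => k.elim0, ?_⟩
    funext x α
    have h := (Finset.sum_eq_zero_iff_of_nonneg fun y _ => hnn y α).1
      ((hcol α).antisymm (Finset.sum_nonneg fun y _ => hnn y α)) x (Finset.mem_univ x)
    simpa using h
  · have : Fintype (colH H) := hfin.fintype
    have hrow' : ∀ x, ∑ a : colH H, H x a = q := by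
      intro x
      rw [← hrow x, finsum_eq_sum_of_support_subset (s := (colH H).toFinset) _
        (fun α hα => by simpa using ⟨x, hα⟩)]
      exact (Finset.sum_subtype _ (fun α => Set.mem_toFinset) _).symm
    obtain ⟨m, c, π, hc, hsum, hinj, hA⟩ := exists_eq_sum_injective
      (fun x (a : colH H) => H x a) hq (fun x a => hnn x a) hrow' (fun a => hcol a)
    refine ⟨m, c, fun k x => π k x, hc, hsum, fun k => Subtype.val_injective.comp (hinj k),
      fun k x => (π k x).2, ?_⟩
    funext x α
    by_cases hα : α ∈ colH H
    · simpa [permMat, Subtype.ext_iff] using hA x ⟨α, hα⟩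
    · have hne : ∀ k, (π k x : ℕ) ≠ α := fun k h => hα (h ▸ (π k x).2)
      have h0 : H x α = 0 := by_contra fun h => hα ⟨x, h⟩
      simp [permMat, hne, h0]
end
end
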